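/- If G is one of the four graphs C₄, C₆, K₄, K₃,₃, then the distinguishing chromatic index of its endline graph satisfies χ'_D(G⁺) = Δ(G) + 2, where Δ(G) is the maximum degree of G. -/

import Mathlib

open SimpleGraph

/-- The middle graph `M(G)`: vertices are `V(G) ⊕ E(G)`; two edges are adjacent
iff they are distinct and share an endpoint; a vertex and an edge are adjacent
iff the vertex is incident to the edge. -/
def middleGraph {V : Type*} (G : SimpleGraph V) : SimpleGraph (V ⊕ G.edgeSet) :=
  SimpleGraph.fromRel fun x y =>
    match x, y with
    | Sum.inr e, Sum.inr f => e ≠ f ∧ ∃ v, v ∈ (e : Sym2 V) ∧ v ∈ (f : Sym2 V)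
    | Sum.inl v, Sum.inr e => v ∈ (e : Sym2 V)
    | _, _ => False

/-- The subdivision graph `S(G)`: vertices are `V(G) ⊕ E(G)`; `v ∈ V(G)` and
`e ∈ E(G)` are adjacent iff `v` is incident to `e`. -/
def subdivisionGraph {V : Type*} (G : SimpleGraph V) : SimpleGraph (V ⊕ G.edgeSet) :=
  SimpleGraph.fromRel fun x y =>
    match x, y with
    | Sum.inl v, Sum.inr e => v ∈ (e : Sym2 V)
    | _, _ => False

/-- The endline graph `G⁺`: to each vertex `v` of `G` (coded `Sum.inl v`) we attach a new
pendant vertex (coded `Sum.inr v`) via a new (endline) edge. -/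
def endlineGraph {V : Type*} (G : SimpleGraph V) : SimpleGraph (V ⊕ V) :=
  SimpleGraph.fromRel fun x y =>
    match x, y with
    | Sum.inl u, Sum.inl v => G.Adj u v
    | Sum.inl v, Sum.inr u => v = u
    | _, _ => False

/-- A vertex coloring is distinguishing if the only automorphism preserving it is the identity. -/
def IsDistinguishingVertexColoring {V α : Type*} (G : SimpleGraph V) (c : V → α) : Prop :=
  ∀ φ : G ≃g G, (∀ v, c (φ v) = c v) → ∀ v, φ v = v

/-- A proper vertex coloring assigns different colors to adjacent vertices. -/
def IsProperVertexColoring {V α : Type*} (G : SimpleGraph V) (c : V → α) : Prop :=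
  ∀ u v, G.Adj u v → c u ≠ c v

/-- The distinguishing number `D(G)`. -/
noncomputable def distinguishingNumber {V : Type*} (G : SimpleGraph V) : ℕ :=
  sInf {r | ∃ c : V → Fin r, IsDistinguishingVertexColoring G c}

/-- The distinguishing chromatic number `χ_D(G)`. -/
noncomputable def distinguishingChromaticNumber {V : Type*} (G : SimpleGraph V) : ℕ :=
  sInf {r | ∃ c : V → Fin r,
    IsProperVertexColoring G c ∧ IsDistinguishingVertexColoring G c}

/-- An edge coloring is distinguishing if the only automorphism preserving it is the identity. -/
def IsDistinguishingEdgeColoring {V α : Type*} (G : SimpleGraph V) (c : G.edgeSet → α) : Prop :=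
  ∀ φ : G ≃g G, (∀ e, c (φ.mapEdgeSet e) = c e) → ∀ v, φ v = v

/-- A proper edge coloring assigns different colors to distinct edges sharing an endpoint. -/
def IsProperEdgeColoring {V α : Type*} (G : SimpleGraph V) (c : G.edgeSet → α) : Prop :=
  ∀ e f : G.edgeSet, e ≠ f → (∃ v, v ∈ (e : Sym2 V) ∧ v ∈ (f : Sym2 V)) → c e ≠ c f

/-- The distinguishing index `D'(G)`. -/
noncomputable def distinguishingIndex {V : Type*} (G : SimpleGraph V) : ℕ :=
  sInf {r | ∃ c : G.edgeSet → Fin r, IsDistinguishingEdgeColoring G c}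

/-- The distinguishing chromatic index `χ'_D(G)`. -/
noncomputable def distinguishingChromaticIndex {V : Type*} (G : SimpleGraph V) : ℕ :=
  sInf {r | ∃ c : G.edgeSet → Fin r,
    IsProperEdgeColoring G c ∧ IsDistinguishingEdgeColoring G c}

/-- The total distinguishing number `D''(G)`: the least `d` such that there is a (not
necessarily proper) coloring of vertices and edges with `d` colors preserved only by
the identity automorphism. -/
noncomputable def totalDistinguishingNumber {V : Type*} (G : SimpleGraph V) : ℕ :=
  sInf {d | ∃ (cV : V → Fin d) (cE : G.edgeSet → Fin d),
    ∀ φ : G ≃g G,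
      ((∀ v, cV (φ v) = cV v) ∧ (∀ e, cE (φ.mapEdgeSet e) = cE e)) → ∀ v, φ v = v}

/-!
Let `G` be connected, `k`-regular and properly `k`-edge-colorable, and suppose that every proper
`(k + 1)`-edge-coloring of `G` is preserved by a nontrivial automorphism. In a proper
`(k + 1)`-coloring of `G⁺` the edges of `G` at `v` use all colors but one, so the coloring of `G`
determines that of `G⁺` and its symmetry extends: `k + 2` colors are necessary. They suffice: color
`G` with `k` colors, one endline edge with a color of its own and the others with another one. An
automorphism preserving a proper edge coloring of a connected graph is trivial once it fixes a
vertex.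

The exceptional graphs inherit their symmetries from two facts about cyclic sequences of three
colors without equal neighbors: for length four some opposite entries agree, and for length six
there is a reflection or a half turn. These are the claims for `C₄` and `C₆`. In a 4-colored `K₄`
the four edges meeting a given edge form a 4-cycle in the remaining three colors, so at most one
perfect matching is not monochromatic. In a 4-colored `K₃,₃` some color class is a perfect
matching, whose complement is a hexagon in the remaining three colors.
-/

/-! ### Proper distinguishing edge colorings -/

section EdgeColoring

variable {V W α β : Type*} {G : SimpleGraph V} {H : SimpleGraph W}

/-- `G` has a proper distinguishing edge coloring with colors in `α`; the index `χ'_D(G)` is the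
least `r` for which this holds with `α = Fin r`. -/
def HasProperDistinguishingEdgeColoring (G : SimpleGraph V) (α : Type*) : Prop :=
  ∃ c : G.edgeSet → α, IsProperEdgeColoring G c ∧ IsDistinguishingEdgeColoring G c

namespace HasProperDistinguishingEdgeColoring

theorem of_embedding (h : HasProperDistinguishingEdgeColoring G α) (f : α ↪ β) :
    HasProperDistinguishingEdgeColoring G β := by
  obtain ⟨c, hproper, hdist⟩ := h
  exact ⟨f ∘ c, fun e e' hne hv => f.injective.ne (hproper e e' hne hv),
    fun φ hφ => hdist φ fun e => f.injective (hφ e)⟩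

theorem of_iso (e : G ≃g H) (h : HasProperDistinguishingEdgeColoring H α) :
    HasProperDistinguishingEdgeColoring G α := by
  obtain ⟨c, hproper, hdist⟩ := h
  refine ⟨c ∘ e.mapEdgeSet, ?_, fun φ hφ v => ?_⟩
  · rintro f f' hne ⟨v, hv, hv'⟩
    exact hproper _ _ (e.mapEdgeSet.injective.ne hne)
      ⟨e v, Sym2.mem_map.2 ⟨v, hv, rfl⟩, Sym2.mem_map.2 ⟨v, hv', rfl⟩⟩
  · let ψ : H ≃g H := (e.symm.trans φ).trans e
    have hconj : ∀ f, ψ.mapEdgeSet f = e.mapEdgeSet (φ.mapEdgeSet (e.mapEdgeSet.symm f)) := by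
      rintro ⟨⟨u, v⟩, h⟩
      rfl
    have hfix : ψ (e v) = e v := hdist ψ (fun f => by
      rw [hconj]
      exact (hφ _).trans (congrArg c (e.mapEdgeSet.apply_symm_apply f))) (e v)
    simpa [ψ] using hfix

end HasProperDistinguishingEdgeColoring

theorem distinguishingChromaticIndex_congr (e : G ≃g H) :
    distinguishingChromaticIndex G = distinguishingChromaticIndex H :=
  congrArg sInf <| Set.ext fun _ =>
    ⟨HasProperDistinguishingEdgeColoring.of_iso e.symm,
      HasProperDistinguishingEdgeColoring.of_iso e⟩

theorem distinguishingChromaticIndex_eq_succ_iff {r : ℕ} :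
    distinguishingChromaticIndex G = r + 1 ↔
      HasProperDistinguishingEdgeColoring G (Fin (r + 1)) ∧
        ¬ HasProperDistinguishingEdgeColoring G (Fin r) :=
  Nat.sInf_upward_closed_eq_succ_iff (fun _ _ hle h =>
    HasProperDistinguishingEdgeColoring.of_embedding h (Fin.castLEEmb hle)) r

theorem isProperEdgeColoring_comp_val_iff {d : Sym2 V → α} :
    IsProperEdgeColoring G (d ∘ Subtype.val) ↔
      ∀ u v w, G.Adj u v → G.Adj u w → v ≠ w → d s(u, v) ≠ d s(u, w) := by
  constructor
  · intro hd u v w huv huw hvw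
    exact hd ⟨s(u, v), huv⟩ ⟨s(u, w), huw⟩
      (fun h => hvw (Sym2.congr_right.1 (congrArg Subtype.val h)))
      ⟨u, Sym2.mem_mk_left u v, Sym2.mem_mk_left u w⟩
  · rintro hd ⟨_, he⟩ ⟨_, hf⟩ hne ⟨u, ⟨v, rfl⟩, ⟨w, rfl⟩⟩
    exact hd u v w he hf fun h => hne (by subst h; rfl)

/-- Some nontrivial automorphism of `G` preserves the colors which `d` gives to the edges of `G`;
the values of `d` at other pairs are irrelevant. -/
def HasNontrivialSymmetry (G : SimpleGraph V) (d : Sym2 V → α) : Prop :=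
  ∃ φ : G ≃g G, (∀ u v, G.Adj u v → d s(φ u, φ v) = d s(u, v)) ∧ ∃ v, φ v ≠ v

theorem not_hasProperDistinguishingEdgeColoring_of_forall [Nonempty α]
    (h : ∀ d : Sym2 V → α, IsProperEdgeColoring G (d ∘ Subtype.val) → HasNontrivialSymmetry G d) :
    ¬ HasProperDistinguishingEdgeColoring G α := by
  rintro ⟨c, hproper, hdist⟩
  obtain ⟨d, rfl⟩ := Subtype.val_injective.surjective_comp_right c
  obtain ⟨φ, hφ, v, hv⟩ := h d hproper
  refine hv (hdist φ ?_ v)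
  rintro ⟨⟨u, w⟩, huw⟩
  exact hφ u w huw

namespace IsProperEdgeColoring

variable {c : G.edgeSet → α}

theorem apply_eq_self_of_adj (hc : IsProperEdgeColoring G c) {φ : G ≃g G}
    (hφ : ∀ e, c (φ.mapEdgeSet e) = c e) {u v : V} (hu : φ u = u) (huv : G.Adj u v) :
    φ v = v := by
  by_contra hne
  have hmap : ((φ.mapEdgeSet ⟨s(u, v), huv⟩ : G.edgeSet) : Sym2 V) = s(u, φ v) :=
    congrArg (fun x => s(x, φ v)) hu
  refine hc (φ.mapEdgeSet ⟨s(u, v), huv⟩) ⟨s(u, v), huv⟩ (fun h => hne ?_) ⟨u, ?_, ?_⟩ (hφ _)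
  · exact Sym2.congr_right.1 (hmap.symm.trans (congrArg Subtype.val h))
  · exact hmap ▸ Sym2.mem_mk_left u (φ v)
  · exact Sym2.mem_mk_left u v

theorem apply_eq_self_of_connected (hc : IsProperEdgeColoring G c) (hG : G.Connected)
    {φ : G ≃g G} (hφ : ∀ e, c (φ.mapEdgeSet e) = c e) {u : V} (hu : φ u = u) (v : V) :
    φ v = v := by
  obtain ⟨p⟩ := hG.preconnected u v
  induction p with
  | nil => exact hu
  | cons huv _ ih => exact ih (hc.apply_eq_self_of_adj hφ hu huv)

theorem eq_of_missing [Fintype α] (hc : IsProperEdgeColoring G c) {v : V}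
    [Fintype (G.neighborSet v)] (hcard : Fintype.card α ≤ G.degree v + 1) {a b : α}
    (ha : ∀ e : G.edgeSet, v ∈ (e : Sym2 V) → c e ≠ a)
    (hb : ∀ e : G.edgeSet, v ∈ (e : Sym2 V) → c e ≠ b) : a = b := by
  classical
  by_contra hab
  let color : G.neighborFinset v → α := fun w => c ⟨s(v, w), (G.mem_neighborFinset v w).1 w.2⟩
  have hinj : Function.Injective color := by
    intro w w' h
    by_contra hne
    refine hc _ _ (fun h' => hne ?_) ⟨v, Sym2.mem_mk_left _ _, Sym2.mem_mk_left _ _⟩ h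
    exact Subtype.ext (Sym2.congr_right.1 (congrArg Subtype.val h'))
  have hle : (Finset.univ.image color).card ≤ (({a, b} : Finset α)ᶜ).card := by
    refine Finset.card_le_card fun x hx => ?_
    obtain ⟨w, -, rfl⟩ := Finset.mem_image.1 hx
    simpa using ⟨ha ⟨s(v, w), _⟩ (Sym2.mem_mk_left v w), hb ⟨s(v, w), _⟩ (Sym2.mem_mk_left v w)⟩
  have htwo : ({a, b} : Finset α).card ≤ Fintype.card α := Finset.card_le_univ _
  rw [Finset.card_image_of_injective _ hinj, Finset.card_univ, Fintype.card_coe,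
    G.card_neighborFinset_eq_degree, Finset.card_compl] at hle
  rw [Finset.card_pair hab] at hle htwo
  omega

end IsProperEdgeColoring

end EdgeColoring

/-! ### Edges and automorphisms of the endline graph -/

section EndlineGraph

variable {V W α β γ : Type*} {G : SimpleGraph V} {H : SimpleGraph W}

@[simp]
theorem endlineGraph_adj_inl_inl {u v : V} :
    (endlineGraph G).Adj (Sum.inl u) (Sum.inl v) ↔ G.Adj u v := by
  simp only [endlineGraph, fromRel_adj, ne_eq, Sum.inl.injEq, G.adj_comm v u, or_self]
  exact ⟨And.right, fun h => ⟨h.ne, h⟩⟩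

@[simp]
theorem endlineGraph_adj_inl_inr {u v : V} :
    (endlineGraph G).Adj (Sum.inl u) (Sum.inr v) ↔ u = v := by
  simp [endlineGraph]

@[simp]
theorem endlineGraph_adj_inr_inl {u v : V} :
    (endlineGraph G).Adj (Sum.inr u) (Sum.inl v) ↔ v = u := by
  simp [endlineGraph]

@[simp]
theorem not_endlineGraph_adj_inr_inr {u v : V} :
    ¬ (endlineGraph G).Adj (Sum.inr u) (Sum.inr v) := by
  simp [endlineGraph]

/-- The isomorphism `G⁺ ≃ H⁺` induced by `G ≃ H`. -/
def endlineGraphCongr (e : G ≃g H) : endlineGraph G ≃g endlineGraph H where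
  toEquiv := Equiv.sumCongr e.toEquiv e.toEquiv
  map_rel_iff' := by rintro (u | u) (v | v) <;> simp [e.map_adj_iff]

theorem endlineGraph_connected (hG : G.Connected) : (endlineGraph G).Connected := by
  have : Nonempty V := hG.nonempty
  have hinl (u v : V) : (endlineGraph G).Reachable (Sum.inl u) (Sum.inl v) :=
    (hG.preconnected u v).map ⟨Sum.inl, endlineGraph_adj_inl_inl.2⟩
  have hinr (v : V) : (endlineGraph G).Reachable (Sum.inl v) (Sum.inr v) :=
    (endlineGraph_adj_inl_inr.2 rfl).reachable
  refine ⟨?_⟩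
  rintro (u | u) (v | v)
  · exact hinl u v
  · exact (hinl u v).trans (hinr v)
  · exact (hinr u).symm.trans (hinl u v)
  · exact ((hinr u).symm.trans (hinl u v)).trans (hinr v)

/-- `G` as an induced subgraph of `G⁺`. -/
def toEndlineGraph (G : SimpleGraph V) : G ↪g endlineGraph G where
  toEmbedding := Function.Embedding.inl
  map_rel_iff' := endlineGraph_adj_inl_inl

/-- The endline edge at `v`. -/
def endlineEdge (G : SimpleGraph V) (v : V) : (endlineGraph G).edgeSet :=
  ⟨s(Sum.inl v, Sum.inr v), (endlineGraph G).mem_edgeSet.2 (endlineGraph_adj_inl_inr.2 rfl)⟩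

theorem mem_toEndlineGraph_mapEdgeSet {e : G.edgeSet} {x : V ⊕ V} :
    x ∈ ((toEndlineGraph G).mapEdgeSet e : Sym2 (V ⊕ V)) ↔
      ∃ v ∈ (e : Sym2 V), Sum.inl v = x :=
  Sym2.mem_map

theorem mem_endlineEdge {v : V} {x : V ⊕ V} :
    x ∈ (endlineEdge G v : Sym2 (V ⊕ V)) ↔ x = Sum.inl v ∨ x = Sum.inr v :=
  Sym2.mem_iff

theorem toEndlineGraph_mapEdgeSet_ne_endlineEdge (e : G.edgeSet) (v : V) :
    (toEndlineGraph G).mapEdgeSet e ≠ endlineEdge G v := by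
  intro h
  have hv : Sum.inr v ∈ ((toEndlineGraph G).mapEdgeSet e : Sym2 (V ⊕ V)) :=
    h ▸ mem_endlineEdge.2 (Or.inr rfl)
  obtain ⟨_, -, hv⟩ := mem_toEndlineGraph_mapEdgeSet.1 hv
  exact Sum.inl_ne_inr hv

theorem endlineEdge_injective : Function.Injective (endlineEdge G) := by
  intro u v h
  have hu : Sum.inl u ∈ (endlineEdge G v : Sym2 (V ⊕ V)) :=
    h ▸ mem_endlineEdge.2 (Or.inl rfl)
  simpa using mem_endlineEdge.1 hu

theorem endlineGraph_edge_cases (e : (endlineGraph G).edgeSet) :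
    (∃ f, (toEndlineGraph G).mapEdgeSet f = e) ∨ ∃ v, endlineEdge G v = e := by
  rcases e with ⟨⟨u | u, v | v⟩, h⟩
  · exact Or.inl ⟨⟨s(u, v), endlineGraph_adj_inl_inl.1 h⟩, rfl⟩
  · obtain rfl := (endlineGraph_adj_inl_inr (G := G)).1 h
    exact Or.inr ⟨u, rfl⟩
  · obtain rfl := (endlineGraph_adj_inr_inl (G := G)).1 h
    exact Or.inr ⟨v, Subtype.ext Sym2.eq_swap⟩
  · exact absurd h (not_endlineGraph_adj_inr_inr (G := G))

/-- The edges of `G⁺` are the edges of `G` and one endline edge for each vertex. -/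
noncomputable def endlineGraphEdgeEquiv (G : SimpleGraph V) :
    G.edgeSet ⊕ V ≃ (endlineGraph G).edgeSet :=
  Equiv.ofBijective (Sum.elim (toEndlineGraph G).mapEdgeSet (endlineEdge G)) <| by
    refine ⟨(toEndlineGraph G).mapEdgeSet.injective.sumElim endlineEdge_injective
      toEndlineGraph_mapEdgeSet_ne_endlineEdge, fun e => ?_⟩
    rcases endlineGraph_edge_cases e with ⟨f, rfl⟩ | ⟨v, rfl⟩
    · exact ⟨Sum.inl f, rfl⟩
    · exact ⟨Sum.inr v, rfl⟩

/-! ### Lower bound -/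

theorem IsProperEdgeColoring.comp_toEndlineGraph {c : (endlineGraph G).edgeSet → α}
    (hc : IsProperEdgeColoring (endlineGraph G) c) :
    IsProperEdgeColoring G (c ∘ (toEndlineGraph G).mapEdgeSet) := by
  rintro e f hne ⟨v, hve, hvf⟩
  exact hc _ _ ((toEndlineGraph G).mapEdgeSet.injective.ne hne)
    ⟨Sum.inl v, mem_toEndlineGraph_mapEdgeSet.2 ⟨v, hve, rfl⟩,
      mem_toEndlineGraph_mapEdgeSet.2 ⟨v, hvf, rfl⟩⟩

theorem IsProperEdgeColoring.apply_ne_endlineEdge {c : (endlineGraph G).edgeSet → α}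
    (hc : IsProperEdgeColoring (endlineGraph G) c) {v : V} {e : G.edgeSet}
    (hv : v ∈ (e : Sym2 V)) :
    c ((toEndlineGraph G).mapEdgeSet e) ≠ c (endlineEdge G v) :=
  hc _ _ (toEndlineGraph_mapEdgeSet_ne_endlineEdge e v)
    ⟨Sum.inl v, mem_toEndlineGraph_mapEdgeSet.2 ⟨v, hv, rfl⟩, mem_endlineEdge.2 (Or.inl rfl)⟩

theorem HasProperDistinguishingEdgeColoring.of_endlineGraph [Fintype α] [G.LocallyFinite]
    (hcard : ∀ v, Fintype.card α ≤ G.degree v + 1)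
    (h : HasProperDistinguishingEdgeColoring (endlineGraph G) α) :
    HasProperDistinguishingEdgeColoring G α := by
  obtain ⟨c, hproper, hdist⟩ := h
  refine ⟨c ∘ (toEndlineGraph G).mapEdgeSet, hproper.comp_toEndlineGraph, fun σ hσ v => ?_⟩
  have hendline (v : V) : c (endlineEdge G (σ v)) = c (endlineEdge G v) := by
    refine hproper.comp_toEndlineGraph.eq_of_missing (hcard v) (fun e hv => ?_)
      fun e hv => hproper.apply_ne_endlineEdge hv
    rw [← hσ e]
    exact hproper.apply_ne_endlineEdge (Sym2.mem_map.2 ⟨v, hv, rfl⟩)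
  have hfix := hdist (endlineGraphCongr σ) (fun e => ?_) (Sum.inl v)
  · exact Sum.inl_injective hfix
  · rcases endlineGraph_edge_cases e with ⟨⟨⟨u, w⟩, huw⟩, rfl⟩ | ⟨u, rfl⟩
    · exact hσ ⟨s(u, w), huw⟩
    · exact hendline u

/-! ### Upper bound -/

/-- The edge coloring of `G⁺` given by `c` on the edges of `G` and by `p v` on the endline edge
at `v`, with disjoint sets of colors. -/
noncomputable def endlineColoring (c : G.edgeSet → β) (p : V → γ) :
    (endlineGraph G).edgeSet → β ⊕ γ :=
  Sum.map c p ∘ (endlineGraphEdgeEquiv G).symm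

theorem endlineColoring_mapEdgeSet (c : G.edgeSet → β) (p : V → γ) (e : G.edgeSet) :
    endlineColoring c p ((toEndlineGraph G).mapEdgeSet e) = Sum.inl (c e) :=
  congrArg (Sum.map c p) ((endlineGraphEdgeEquiv G).symm_apply_apply (Sum.inl e))

theorem endlineColoring_endlineEdge (c : G.edgeSet → β) (p : V → γ) (v : V) :
    endlineColoring c p (endlineEdge G v) = Sum.inr (p v) :=
  congrArg (Sum.map c p) ((endlineGraphEdgeEquiv G).symm_apply_apply (Sum.inr v))

theorem IsProperEdgeColoring.endlineColoring {c : G.edgeSet → β} (hc : IsProperEdgeColoring G c)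
    (p : V → γ) : IsProperEdgeColoring (endlineGraph G) (endlineColoring c p) := by
  rintro e f hne ⟨x, hxe, hxf⟩
  rcases endlineGraph_edge_cases e with ⟨e, rfl⟩ | ⟨u, rfl⟩ <;>
    rcases endlineGraph_edge_cases f with ⟨f, rfl⟩ | ⟨v, rfl⟩
  · obtain ⟨w, hwe, rfl⟩ := mem_toEndlineGraph_mapEdgeSet.1 hxe
    obtain ⟨w', hwf, hw'⟩ := mem_toEndlineGraph_mapEdgeSet.1 hxf
    obtain rfl := Sum.inl_injective hw'
    rw [endlineColoring_mapEdgeSet, endlineColoring_mapEdgeSet]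
    exact Sum.inl_injective.ne (hc e f (ne_of_apply_ne _ hne) ⟨w', hwe, hwf⟩)
  · rw [endlineColoring_mapEdgeSet, endlineColoring_endlineEdge]
    exact Sum.inl_ne_inr
  · rw [endlineColoring_mapEdgeSet, endlineColoring_endlineEdge]
    exact Sum.inr_ne_inl
  · have huv : u = v := by
      rcases mem_endlineEdge.1 hxe with rfl | rfl <;> simpa using mem_endlineEdge.1 hxf
    exact absurd (congrArg (endlineEdge G) huv) hne

theorem apply_inl_eq_of_mapEdgeSet_endlineEdge_eq {φ : endlineGraph G ≃g endlineGraph G}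
    {v w : V} (hvw : G.Adj v w) (hφ : φ.mapEdgeSet (endlineEdge G v) = endlineEdge G v) :
    φ (Sum.inl v) = Sum.inl v := by
  have hpair : s(φ (Sum.inl v), φ (Sum.inr v)) = s(Sum.inl v, Sum.inr v) :=
    congrArg Subtype.val hφ
  rcases Sym2.eq_iff.1 hpair with ⟨h, -⟩ | ⟨hinl, hinr⟩
  · exact h
  · -- `φ` would turn the non-leaf `inl v` into the leaf `inr v`.
    have hadj : (endlineGraph G).Adj (Sum.inr v) (φ (Sum.inl w)) :=
      hinl ▸ φ.map_adj_iff.2 (endlineGraph_adj_inl_inl.2 hvw)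
    have hw : φ (Sum.inl w) = Sum.inl v := by
      rcases hx : φ (Sum.inl w) with x | x <;> simp_all
    exact absurd (φ.injective (hw.trans hinr.symm)) Sum.inl_ne_inr

theorem HasProperDistinguishingEdgeColoring.endlineGraph_sum_bool [Nontrivial V]
    (hG : G.Connected) {c : G.edgeSet → β} (hc : IsProperEdgeColoring G c) :
    HasProperDistinguishingEdgeColoring (endlineGraph G) (β ⊕ Bool) := by
  classical
  obtain ⟨v₀⟩ := hG.nonempty
  obtain ⟨w, hw⟩ := hG.preconnected.exists_adj_of_nontrivial v₀
  let p : V → Bool := fun v => decide (v = v₀)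
  refine ⟨endlineColoring c p, hc.endlineColoring p, fun φ hφ => ?_⟩
  have hedge : φ.mapEdgeSet (endlineEdge G v₀) = endlineEdge G v₀ := by
    have hcolor := hφ (endlineEdge G v₀)
    rcases endlineGraph_edge_cases (φ.mapEdgeSet (endlineEdge G v₀)) with ⟨f, hf⟩ | ⟨v, hv⟩
    · rw [← hf, endlineColoring_mapEdgeSet, endlineColoring_endlineEdge] at hcolor
      exact absurd hcolor Sum.inl_ne_inr
    · rw [← hv, endlineColoring_endlineEdge, endlineColoring_endlineEdge] at hcolor
      obtain rfl : v = v₀ := by simpa [p] using hcolor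
      exact hv.symm
  exact (hc.endlineColoring p).apply_eq_self_of_connected (endlineGraph_connected hG) hφ
    (apply_inl_eq_of_mapEdgeSet_endlineEdge_eq hw hedge)

theorem distinguishingChromaticIndex_endlineGraph_of_isRegularOfDegree [Fintype V] [Nontrivial V]
    [DecidableRel G.Adj] {k : ℕ} (hG : G.Connected) (hreg : G.IsRegularOfDegree k)
    (hproper : ∃ c : G.edgeSet → Fin k, IsProperEdgeColoring G c)
    (hdist : ¬ HasProperDistinguishingEdgeColoring G (Fin (k + 1))) :
    distinguishingChromaticIndex (endlineGraph G) = G.maxDegree + 2 := by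
  obtain ⟨c, hc⟩ := hproper
  rw [hreg.maxDegree_eq]
  refine distinguishingChromaticIndex_eq_succ_iff.2 ⟨?_, fun h => hdist (h.of_endlineGraph ?_)⟩
  · have e : Fin k ⊕ Bool ≃ Fin (k + 2) := Fintype.equivOfCardEq (by simp)
    exact (HasProperDistinguishingEdgeColoring.endlineGraph_sum_bool hG hc).of_embedding
      e.toEmbedding
  · intro v
    simp [hreg.degree_eq v]

end EndlineGraph

/-! ### Cyclic sequences of three colors -/

section CyclicSequence

variable {α : Type*} {s : Finset α}

theorem eq_or_eq_of_card_le_three (hs : s.card ≤ 3) {a b c d : α} (ha : a ∈ s) (hb : b ∈ s)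
    (hc : c ∈ s) (hd : d ∈ s) (hab : a ≠ b) (hbc : b ≠ c) (hcd : c ≠ d) (hda : d ≠ a) :
    a = c ∨ b = d := by
  classical
  by_contra! h
  have hfour : ({a, b, c, d} : Finset α).card = 4 := by grind
  have hsub : ({a, b, c, d} : Finset α) ⊆ s := by simp [Finset.insert_subset_iff, *]
  have := Finset.card_le_card hsub
  omega

theorem exists_reflection_of_cyclic_four (hs : s.card ≤ 3) {x : Fin 4 → α} (hxs : ∀ i, x i ∈ s)
    (hx : ∀ i, x i ≠ x (i + 1)) : ∃ m, ∀ t, x (m - t) = x (m + t) := by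
  rcases eq_or_eq_of_card_le_three hs (hxs 0) (hxs 1) (hxs 2) (hxs 3) (hx 0) (hx 1) (hx 2) (hx 3)
    with h | h
  · refine ⟨1, fun t => ?_⟩
    fin_cases t
    exacts [rfl, h, rfl, h.symm]
  · refine ⟨0, fun t => ?_⟩
    fin_cases t
    exacts [rfl, h.symm, rfl, h]

variable {x : Fin 6 → α}

theorem cyclic_six_reflection {m : Fin 6} (hone : x (m + 5) = x (m + 1))
    (htwo : x (m + 4) = x (m + 2)) (t : Fin 6) : x (m - t) = x (m + t) := by
  have ht : t = 0 ∨ t = 1 ∨ t = 2 ∨ t = 3 ∨ t = 4 ∨ t = 5 := by fin_cases t <;> simp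
  grind

theorem exists_reflection_of_cyclic_six (hs : s.card ≤ 3) (hxs : ∀ i, x i ∈ s)
    (hx : ∀ i, x i ≠ x (i + 1)) {k : Fin 6} (hk : x k = x (k + 2)) :
    ∃ m, ∀ t, x (m - t) = x (m + t) := by
  have h01 : x k ≠ x (k + 1) := hx k
  have h03 : x k ≠ x (k + 3) := by simpa [add_assoc, hk] using hx (k + 2)
  have h34 : x (k + 3) ≠ x (k + 4) := by simpa [add_assoc] using hx (k + 3)
  have h45 : x (k + 4) ≠ x (k + 5) := by simpa [add_assoc] using hx (k + 4)
  have h50 : x (k + 5) ≠ x k := by simpa [add_assoc] using hx (k + 5)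
  by_cases h35 : x (k + 3) = x (k + 5)
  · exact ⟨k + 1, cyclic_six_reflection (by simpa [add_assoc] using hk)
      (by simpa [add_assoc] using h35.symm)⟩
  have h04 : x k = x (k + 4) := (eq_or_eq_of_card_le_three hs (hxs _) (hxs _) (hxs _) (hxs _)
    h03 h34 h45 h50).resolve_right h35
  by_cases h13 : x (k + 1) = x (k + 3)
  · exact ⟨k + 2, cyclic_six_reflection (by simpa [add_assoc] using h13)
      (by simpa [add_assoc] using h04)⟩
  have h15 : x (k + 1) = x (k + 5) := (eq_or_eq_of_card_le_three hs (hxs _) (hxs _) (hxs _)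
    (hxs _) h13 h35 h50 h01).resolve_right h03.symm
  exact ⟨k, cyclic_six_reflection h15.symm (h04.symm.trans hk)⟩

theorem reflection_or_halfTurn_of_cyclic_six (hs : s.card ≤ 3) (hxs : ∀ i, x i ∈ s)
    (hx : ∀ i, x i ≠ x (i + 1)) :
    (∃ m, ∀ t, x (m - t) = x (m + t)) ∨ ∀ i, x (i + 3) = x i := by
  by_cases h : ∃ k, x k = x (k + 2)
  · obtain ⟨k, hk⟩ := h
    exact Or.inl (exists_reflection_of_cyclic_six hs hxs hx hk)
  · push Not at h
    refine Or.inr fun i => ?_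
    have h12 : x (i + 1) ≠ x (i + 2) := by simpa [add_assoc] using hx (i + 1)
    have h13 : x (i + 1) ≠ x (i + 3) := by simpa [add_assoc] using h (i + 1)
    have h23 : x (i + 2) ≠ x (i + 3) := by simpa [add_assoc] using hx (i + 2)
    exact ((eq_or_eq_of_card_le_three hs (hxs _) (hxs _) (hxs _) (hxs _) (hx i) h13 h23.symm
      (h i).symm).resolve_right h12).symm

end CyclicSequence

/-! ### Cycles -/

section Cycle

variable {α : Type*} {n : ℕ}

theorem cycleGraph_adj_add_one (i : Fin (n + 2)) : (cycleGraph (n + 2)).Adj i (i + 1) := by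
  simp [cycleGraph_adj]

theorem exists_eq_add_one_of_cycleGraph_adj {u v : Fin (n + 2)}
    (h : (cycleGraph (n + 2)).Adj u v) : ∃ i, s(u, v) = s(i, i + 1) := by
  rcases cycleGraph_adj.1 h with h | h
  · exact ⟨v, by rw [← h, add_sub_cancel, Sym2.eq_swap]⟩
  · exact ⟨u, by rw [← h, add_sub_cancel]⟩

/-- The reflection of the cycle that sends the edge `{m + t, m + t + 1}` to the edge
`{m - t, m - t + 1}`. -/
def cycleReflection (m : Fin (n + 2)) : cycleGraph (n + 2) ≃g cycleGraph (n + 2) where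
  toEquiv := Equiv.subLeft (m + (m + 1))
  map_rel_iff' := by simp [cycleGraph_adj, or_comm]

/-- The rotation of the cycle by `k` steps. -/
def cycleRotation (k : Fin (n + 2)) : cycleGraph (n + 2) ≃g cycleGraph (n + 2) where
  toEquiv := Equiv.addRight k
  map_rel_iff' := by simp [cycleGraph_adj]

theorem HasNontrivialSymmetry.of_cycleReflection {d : Sym2 (Fin (n + 2)) → α} {m : Fin (n + 2)}
    (h : ∀ t, d s(m - t, m - t + 1) = d s(m + t, m + t + 1)) :
    HasNontrivialSymmetry (cycleGraph (n + 2)) d := by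
  refine ⟨cycleReflection m, fun u v huv => ?_, m, ?_⟩
  · obtain ⟨i, hi⟩ := exists_eq_add_one_of_cycleGraph_adj huv
    change d (Sym2.map (cycleReflection m) s(u, v)) = d s(u, v)
    rw [hi]
    have hl : cycleReflection m i = m - (i - m) + 1 := by simp [cycleReflection]; abel
    have hr : cycleReflection m (i + 1) = m - (i - m) := by simp [cycleReflection]; abel
    simpa [hl, hr, Sym2.eq_swap] using h (i - m)
  · simp [cycleReflection]

theorem HasNontrivialSymmetry.of_cycleRotation {d : Sym2 (Fin (n + 2)) → α} {k : Fin (n + 2)}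
    (hk : k ≠ 0) (h : ∀ i, d s(i + k, i + k + 1) = d s(i, i + 1)) :
    HasNontrivialSymmetry (cycleGraph (n + 2)) d := by
  refine ⟨cycleRotation k, fun u v huv => ?_, 0, by simpa [cycleRotation] using hk⟩
  obtain ⟨i, hi⟩ := exists_eq_add_one_of_cycleGraph_adj huv
  change d (Sym2.map (cycleRotation k) s(u, v)) = d s(u, v)
  rw [hi, ← h i]
  exact congrArg (fun j => d s(i + k, j)) (add_right_comm i 1 k)

theorem IsProperEdgeColoring.cycleGraph_ne {d : Sym2 (Fin (n + 3)) → α}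
    (hd : IsProperEdgeColoring (cycleGraph (n + 3)) (d ∘ Subtype.val)) (i : Fin (n + 3)) :
    d s(i, i + 1) ≠ d s(i + 1, i + 1 + 1) := by
  rw [Sym2.eq_swap]
  refine isProperEdgeColoring_comp_val_iff.1 hd (i + 1) i (i + 1 + 1)
    (cycleGraph_adj_add_one i).symm (cycleGraph_adj_add_one (i + 1)) ?_
  have htwo : 2 % (n + 3) = 2 := Nat.mod_eq_of_lt (by omega)
  simp [add_assoc, Fin.ext_iff, Fin.val_add, htwo]

theorem not_hasProperDistinguishingEdgeColoring_cycleGraph_four :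
    ¬ HasProperDistinguishingEdgeColoring (cycleGraph 4) (Fin 3) := by
  refine not_hasProperDistinguishingEdgeColoring_of_forall fun d hd => ?_
  obtain ⟨m, hm⟩ := exists_reflection_of_cyclic_four (s := Finset.univ) (by simp)
    (x := fun i => d s(i, i + 1)) (fun _ => Finset.mem_univ _) hd.cycleGraph_ne
  exact .of_cycleReflection hm

theorem not_hasProperDistinguishingEdgeColoring_cycleGraph_six :
    ¬ HasProperDistinguishingEdgeColoring (cycleGraph 6) (Fin 3) := by
  refine not_hasProperDistinguishingEdgeColoring_of_forall fun d hd => ?_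
  rcases reflection_or_halfTurn_of_cyclic_six (s := Finset.univ) (by simp)
    (x := fun i => d s(i, i + 1)) (fun _ => Finset.mem_univ _) hd.cycleGraph_ne
    with ⟨m, hm⟩ | hturn
  · exact .of_cycleReflection hm
  · exact .of_cycleRotation (by decide) hturn

theorem cycleGraph_adj_val {u v : Fin n} (h : (cycleGraph n).Adj u v) :
    (v : ℕ) = u + 1 ∨ (u : ℕ) = v + 1 ∨ (u : ℕ) + 1 = n ∧ (v : ℕ) = 0 ∨
      (v : ℕ) + 1 = n ∧ (u : ℕ) = 0 := by
  have hsub (a b : Fin n) (hab : (a - b).val = 1) :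
      (a : ℕ) = b + 1 ∨ (b : ℕ) + 1 = n ∧ (a : ℕ) = 0 := by
    rcases le_or_gt b a with hle | hlt
    · rw [Fin.sub_val_of_le hle] at hab
      omega
    · rw [Fin.val_sub, Nat.mod_eq_of_lt (by omega)] at hab
      omega
  rcases cycleGraph_adj'.1 h with h | h <;> have := hsub _ _ h <;> omega

theorem exists_isProperEdgeColoring_cycleGraph_of_even (hn : Even n) :
    ∃ c : (cycleGraph n).edgeSet → Fin 2, IsProperEdgeColoring (cycleGraph n) c := by
  let d : Sym2 (Fin n) → Fin 2 :=
    Sym2.lift ⟨fun u v => if (u : ℕ) / 2 = v / 2 then 0 else 1, fun u v => by simp only [eq_comm]⟩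
  refine ⟨d ∘ Subtype.val, isProperEdgeColoring_comp_val_iff.2 fun u v w huv huw hvw => ?_⟩
  have hv := cycleGraph_adj_val huv
  have hw := cycleGraph_adj_val huw
  have hval : (v : ℕ) ≠ w := Fin.val_injective.ne hvw
  obtain ⟨m, rfl⟩ := hn
  simp only [d, Sym2.lift_mk]
  split_ifs <;> omega

theorem cycleGraph_isRegularOfDegree : (cycleGraph (n + 3)).IsRegularOfDegree 2 :=
  fun _ => cycleGraph_degree_three_le

theorem distinguishingChromaticIndex_endlineGraph_cycleGraph_four :
    distinguishingChromaticIndex (endlineGraph (cycleGraph 4)) = (cycleGraph 4).maxDegree + 2 :=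
  distinguishingChromaticIndex_endlineGraph_of_isRegularOfDegree cycleGraph_connected
    cycleGraph_isRegularOfDegree (exists_isProperEdgeColoring_cycleGraph_of_even (by decide))
    not_hasProperDistinguishingEdgeColoring_cycleGraph_four

theorem distinguishingChromaticIndex_endlineGraph_cycleGraph_six :
    distinguishingChromaticIndex (endlineGraph (cycleGraph 6)) = (cycleGraph 6).maxDegree + 2 :=
  distinguishingChromaticIndex_endlineGraph_of_isRegularOfDegree cycleGraph_connected
    cycleGraph_isRegularOfDegree (exists_isProperEdgeColoring_cycleGraph_of_even (by decide))
    not_hasProperDistinguishingEdgeColoring_cycleGraph_six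

end Cycle

/-! ### The complete graph on four vertices -/

section CompleteGraphFour

variable {V α : Type*}

theorem IsProperEdgeColoring.eq_or_eq_of_card_le_four [Fintype α] (hα : Fintype.card α ≤ 4)
    {d : Sym2 V → α} (hd : IsProperEdgeColoring (⊤ : SimpleGraph V) (d ∘ Subtype.val))
    {p q r s : V} (hnodup : [p, q, r, s].Nodup) :
    d s(p, q) = d s(r, s) ∨ d s(q, r) = d s(s, p) := by
  classical
  obtain ⟨⟨hpq, hpr, hps⟩, ⟨hqr, hqs⟩, hrs⟩ :
      (p ≠ q ∧ p ≠ r ∧ p ≠ s) ∧ (q ≠ r ∧ q ≠ s) ∧ r ≠ s := by simpa using hnodup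
  have hne : ∀ {u v w}, u ≠ v → v ≠ w → u ≠ w → d s(u, v) ≠ d s(v, w) := by
    intro u v w huv hvw huw
    rw [Sym2.eq_swap]
    exact isProperEdgeColoring_comp_val_iff.1 hd v u w huv.symm hvw huw
  have hswap : d s(r, p) = d s(p, r) := congrArg d Sym2.eq_swap
  have hcard : ({d s(p, r)}ᶜ : Finset α).card ≤ 3 := by
    rw [Finset.card_compl, Finset.card_singleton]
    omega
  -- The edges meeting `pr` form a 4-cycle that avoids the color of `pr`.
  have hpqmem : d s(p, q) ∈ ({d s(p, r)}ᶜ : Finset α) := by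
    simpa [hswap] using (hne hpr.symm hpq hqr.symm).symm
  have hqrmem : d s(q, r) ∈ ({d s(p, r)}ᶜ : Finset α) := by
    simpa [hswap] using hne hqr hpr.symm hpq.symm
  have hrsmem : d s(r, s) ∈ ({d s(p, r)}ᶜ : Finset α) := by
    simpa using (hne hpr hrs hps).symm
  have hspmem : d s(s, p) ∈ ({d s(p, r)}ᶜ : Finset α) := by
    simpa using hne hps.symm hpr hrs.symm
  exact eq_or_eq_of_card_le_three hcard hpqmem hqrmem hrsmem hspmem (hne hpq hqr hpr)
    (hne hqr hrs hqs) (hne hrs hps.symm hpr.symm) (hne hps.symm hpq hqs.symm)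

theorem HasNontrivialSymmetry.of_double_transposition {d : Sym2 V → α} {p q r s : V}
    (hnodup : [p, q, r, s].Nodup) (hV : ∀ v, v = p ∨ v = q ∨ v = r ∨ v = s)
    (hpqrs : d s(p, q) = d s(r, s)) (hqrsp : d s(q, r) = d s(s, p)) :
    HasNontrivialSymmetry (⊤ : SimpleGraph V) d := by
  classical
  obtain ⟨⟨hpq, hpr, hps⟩, ⟨hqr, hqs⟩, hrs⟩ :
      (p ≠ q ∧ p ≠ r ∧ p ≠ s) ∧ (q ≠ r ∧ q ≠ s) ∧ r ≠ s := by simpa using hnodup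
  let σ : Equiv.Perm V := Equiv.swap p r * Equiv.swap q s
  have hσp : σ p = r := by simp [σ, Equiv.swap_apply_of_ne_of_ne, *]
  have hσq : σ q = s := by simp [σ, Equiv.swap_apply_of_ne_of_ne, hps.symm, hrs.symm]
  have hσr : σ r = p := by simp [σ, Equiv.swap_apply_of_ne_of_ne, hqr.symm, hrs]
  have hσs : σ s = q := by simp [σ, Equiv.swap_apply_of_ne_of_ne, hpq.symm, hqr]
  clear_value σ
  refine ⟨Iso.completeGraph σ, fun u v huv => ?_, p, hσp.trans_ne hpr.symm⟩
  change d s(σ u, σ v) = d s(u, v)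
  have hne : u ≠ v := huv.ne
  rcases hV u with rfl | rfl | rfl | rfl <;> rcases hV v with rfl | rfl | rfl | rfl <;>
    grind [Sym2.eq_swap]

theorem not_hasProperDistinguishingEdgeColoring_completeGraph_four :
    ¬ HasProperDistinguishingEdgeColoring (⊤ : SimpleGraph (Fin 4)) (Fin 4) := by
  refine not_hasProperDistinguishingEdgeColoring_of_forall fun d hd => ?_
  have hswap (u v : Fin 4) : d s(u, v) = d s(v, u) := congrArg d Sym2.eq_swap
  have hmono (p q r s : Fin 4) (h : [p, q, r, s].Nodup) := hd.eq_or_eq_of_card_le_four (by simp) h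
  by_cases h01 : d s(0, 1) = d s(2, 3)
  · rcases hmono 0 2 1 3 (by decide) with h02 | h12
    · exact .of_double_transposition (p := 0) (q := 1) (r := 3) (s := 2) (by decide) (by decide)
        (h01.trans (hswap 2 3)) (h02.symm.trans (hswap 0 2))
    · exact .of_double_transposition (p := 0) (q := 1) (r := 2) (s := 3) (by decide) (by decide)
        h01 ((hswap 1 2).trans h12)
  · have h12 : d s(1, 2) = d s(3, 0) := (hmono 0 1 2 3 (by decide)).resolve_left h01
    have h02 : d s(1, 3) = d s(2, 0) :=
      (hmono 0 1 3 2 (by decide)).resolve_left (hswap 3 2 ▸ h01)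
    exact .of_double_transposition (p := 1) (q := 2) (r := 0) (s := 3) (by decide) (by decide)
      (h12.trans (hswap 3 0)) (h02.symm.trans (hswap 1 3))

theorem exists_isProperEdgeColoring_completeGraph_four :
    ∃ c : (⊤ : SimpleGraph (Fin 4)).edgeSet → Fin 3, IsProperEdgeColoring ⊤ c := by
  -- Disjoint edges have the same bitwise xor, one of `1`, `2`, `3`.
  let d : Sym2 (Fin 4) → Fin 3 :=
    Sym2.lift ⟨fun u v => Fin.ofNat 3 (u ^^^ v), fun u v => by simp only [Nat.xor_comm]⟩
  exact ⟨d ∘ Subtype.val, isProperEdgeColoring_comp_val_iff.2 (by decide)⟩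

theorem distinguishingChromaticIndex_endlineGraph_completeGraph_four :
    distinguishingChromaticIndex (endlineGraph (⊤ : SimpleGraph (Fin 4))) =
      (⊤ : SimpleGraph (Fin 4)).maxDegree + 2 :=
  distinguishingChromaticIndex_endlineGraph_of_isRegularOfDegree connected_top
    IsRegularOfDegree.top exists_isProperEdgeColoring_completeGraph_four
    not_hasProperDistinguishingEdgeColoring_completeGraph_four

end CompleteGraphFour

/-! ### The complete bipartite graph `K₃,₃` -/

section CompleteBipartite

theorem IsProperEdgeColoring.exists_color_forall_mem {V α : Type*} {G : SimpleGraph V}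
    [G.LocallyFinite] [Fintype α] {c : G.edgeSet → α} (hc : IsProperEdgeColoring G c)
    {S : Finset V} (hS : S.card < Fintype.card α)
    (hdeg : ∀ v ∈ S, Fintype.card α ≤ G.degree v + 1) :
    ∃ a, ∀ v ∈ S, ∃ e : G.edgeSet, v ∈ (e : Sym2 V) ∧ c e = a := by
  by_contra! h
  choose v hvS hv using h
  obtain ⟨a, -, b, -, hab, hvab⟩ := Finset.exists_ne_map_eq_of_card_lt_of_maps_to
    (s := Finset.univ) (t := S) (f := v) (by simpa using hS) fun a _ => hvS a
  exact hab (hc.eq_of_missing (hdeg _ (hvS a)) (hv a) (hvab ▸ hv b))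

variable {ι κ α : Type*} {d : Sym2 (ι ⊕ κ) → α}

instance : DecidableRel (completeBipartiteGraph ι κ).Adj := fun u v =>
  inferInstanceAs (Decidable (u.isLeft ∧ v.isRight ∨ u.isRight ∧ v.isLeft))

theorem completeBipartiteGraph_connected [Nonempty ι] [Nonempty κ] :
    (completeBipartiteGraph ι κ).Connected := by
  have hlr (i : ι) (j : κ) :
      (completeBipartiteGraph ι κ).Reachable (Sum.inl i) (Sum.inr j) :=
    Adj.reachable (by simp)
  obtain ⟨i₀⟩ := ‹Nonempty ι›
  obtain ⟨j₀⟩ := ‹Nonempty κ›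
  have : Nonempty (ι ⊕ κ) := ⟨Sum.inl i₀⟩
  refine ⟨?_⟩
  rintro (i | i) (j | j)
  · exact (hlr i j₀).trans (hlr j j₀).symm
  · exact hlr i j
  · exact (hlr j i).symm
  · exact (hlr i₀ i).symm.trans (hlr i₀ j)

theorem completeBipartiteGraph_isRegularOfDegree [Fintype ι] :
    (completeBipartiteGraph ι ι).IsRegularOfDegree (Fintype.card ι) := by
  rintro (i | j) <;> rw [← card_neighborFinset_eq_degree]
  · have hneighbors : (completeBipartiteGraph ι ι).neighborFinset (Sum.inl i) =
        Finset.univ.map Function.Embedding.inr := by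
      ext (v | v) <;> simp
    simp [hneighbors]
  · have hneighbors : (completeBipartiteGraph ι ι).neighborFinset (Sum.inr j) =
        Finset.univ.map Function.Embedding.inl := by
      ext (v | v) <;> simp
    simp [hneighbors]

/-- The automorphism of a complete bipartite graph that exchanges the sides along `π`. -/
def completeBipartiteSideSwap (π : ι ≃ κ) :
    completeBipartiteGraph ι κ ≃g completeBipartiteGraph ι κ where
  toEquiv := (Equiv.sumCongr π π.symm).trans (Equiv.sumComm κ ι)
  map_rel_iff' := by rintro (i | i) (j | j) <;> simp

theorem HasNontrivialSymmetry.of_sideSwap [Nonempty ι] (π : ι ≃ κ)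
    (h : ∀ i j, d s(Sum.inl (π.symm j), Sum.inr (π i)) = d s(Sum.inl i, Sum.inr j)) :
    HasNontrivialSymmetry (completeBipartiteGraph ι κ) d := by
  refine ⟨completeBipartiteSideSwap π, ?_, Sum.inl (Classical.arbitrary ι), Sum.inr_ne_inl⟩
  rintro (i | j) (i' | j') huv
  · simp at huv
  · exact (congrArg d Sym2.eq_swap).trans (h i j')
  · exact (h i' j).trans (congrArg d Sym2.eq_swap)
  · simp at huv

theorem IsProperEdgeColoring.completeBipartiteGraph_row_injective
    (hd : IsProperEdgeColoring (completeBipartiteGraph ι κ) (d ∘ Subtype.val)) (i : ι) :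
    Function.Injective fun j => d s(Sum.inl i, Sum.inr j) := by
  intro j j' h
  by_contra hne
  exact isProperEdgeColoring_comp_val_iff.1 hd (Sum.inl i) (Sum.inr j) (Sum.inr j') (by simp)
    (by simp) (Sum.inr_injective.ne hne) h

theorem IsProperEdgeColoring.completeBipartiteGraph_column_injective
    (hd : IsProperEdgeColoring (completeBipartiteGraph ι κ) (d ∘ Subtype.val)) (j : κ) :
    Function.Injective fun i => d s(Sum.inl i, Sum.inr j) := by
  intro i i' h
  by_contra hne
  refine isProperEdgeColoring_comp_val_iff.1 hd (Sum.inr j) (Sum.inl i) (Sum.inl i') (by simp)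
    (by simp) (Sum.inl_injective.ne hne) ?_
  exact (congrArg d Sym2.eq_swap).trans (h.trans (congrArg d Sym2.eq_swap))

theorem IsProperEdgeColoring.exists_monochromatic_perfectMatching [Fintype ι] [Fintype α]
    (hα : Fintype.card α = Fintype.card ι + 1) {d : Sym2 (ι ⊕ ι) → α}
    (hd : IsProperEdgeColoring (completeBipartiteGraph ι ι) (d ∘ Subtype.val)) :
    ∃ (a : α) (τ : Equiv.Perm ι), ∀ i, d s(Sum.inl i, Sum.inr (τ i)) = a := by
  obtain ⟨a, ha⟩ := hd.exists_color_forall_mem (S := Finset.univ.map Function.Embedding.inl)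
    (by simp [hα])
    (by simp [hα, completeBipartiteGraph_isRegularOfDegree.degree_eq])
  have hrow (i : ι) : ∃ j, d s(Sum.inl i, Sum.inr j) = a := by
    obtain ⟨⟨_, he⟩, ⟨(j | j), rfl⟩, hj⟩ := ha (Sum.inl i) (by simp)
    · simp at he
    · exact ⟨j, hj⟩
  choose τ hτ using hrow
  have hinj : Function.Injective τ := fun i i' h =>
    hd.completeBipartiteGraph_column_injective (τ i) ((hτ i).trans (h ▸ (hτ i').symm))
  exact ⟨a, Equiv.ofBijective τ (Finite.injective_iff_bijective.1 hinj), hτ⟩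

/-- The off-diagonal cells of a `3 × 3` array in a cyclic order in which neighbors share a row or
a column. -/
def offDiagonalCell : Fin 6 → Fin 3 × Fin 3 :=
  ![(0, 1), (0, 2), (1, 2), (1, 0), (2, 0), (2, 1)]

theorem exists_antitranspose_of_diagonal_eq [Fintype α] (hα : Fintype.card α ≤ 4)
    {B : Fin 3 → Fin 3 → α} (hrow : ∀ i, Function.Injective (B i))
    (hcol : ∀ j, Function.Injective fun i => B i j) {a : α} (hdiag : ∀ i, B i i = a) :
    ∃ ρ : Equiv.Perm (Fin 3), ∀ i j, B (ρ.symm j) (ρ i) = B i j := by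
  classical
  let x : Fin 6 → α := fun t => B (offDiagonalCell t).1 (offDiagonalCell t).2
  have hcard : ({a}ᶜ : Finset α).card ≤ 3 := by
    rw [Finset.card_compl, Finset.card_singleton]
    omega
  have hxs (t : Fin 6) : x t ∈ ({a}ᶜ : Finset α) := by
    have hoff : ∀ t, (offDiagonalCell t).1 ≠ (offDiagonalCell t).2 := by decide
    simpa using fun h : x t = a => hoff t (hrow _ ((hdiag _).trans h.symm))
  have hx (t : Fin 6) : x t ≠ x (t + 1) := by
    fin_cases t
    exacts [(hrow 0).ne (by decide), (hcol 2).ne (by decide), (hrow 1).ne (by decide),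
      (hcol 0).ne (by decide), (hrow 2).ne (by decide), (hcol 1).ne (by decide)]
  rcases reflection_or_halfTurn_of_cyclic_six hcard hxs hx with ⟨m, hm⟩ | hturn
  · have hcell : ∀ m i j, i ≠ j → ∃ t, offDiagonalCell (m + t) = (i, j) ∧
        offDiagonalCell (m - t) = (Equiv.swap (offDiagonalCell m).1 (offDiagonalCell m).2 j,
          Equiv.swap (offDiagonalCell m).1 (offDiagonalCell m).2 i) := by decide
    refine ⟨Equiv.swap (offDiagonalCell m).1 (offDiagonalCell m).2, fun i j => ?_⟩
    rcases eq_or_ne i j with rfl | hij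
    · exact (hdiag _).trans (hdiag _).symm
    · obtain ⟨t, hplus, hminus⟩ := hcell m i j hij
      simpa [x, hplus, hminus] using hm t
  · have hcell : ∀ i j, i ≠ j → ∃ t, offDiagonalCell t = (i, j) ∧
        offDiagonalCell (t + 3) = (j, i) := by decide
    refine ⟨Equiv.refl _, fun i j => ?_⟩
    rcases eq_or_ne i j with rfl | hij
    · rfl
    · obtain ⟨t, ht, ht3⟩ := hcell i j hij
      simpa [x, ht, ht3] using hturn t

theorem not_hasProperDistinguishingEdgeColoring_completeBipartiteGraph_three :
    ¬ HasProperDistinguishingEdgeColoring (completeBipartiteGraph (Fin 3) (Fin 3)) (Fin 4) := by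
  refine not_hasProperDistinguishingEdgeColoring_of_forall fun d hd => ?_
  obtain ⟨a, τ, hτ⟩ := hd.exists_monochromatic_perfectMatching (by simp)
  obtain ⟨ρ, hρ⟩ := exists_antitranspose_of_diagonal_eq (by simp)
    (B := fun i j => d s(Sum.inl i, Sum.inr (τ j)))
    (fun i => (hd.completeBipartiteGraph_row_injective i).comp τ.injective)
    (fun j => hd.completeBipartiteGraph_column_injective (τ j)) hτ
  exact .of_sideSwap (ρ.trans τ) fun i j => by simpa using hρ i (τ.symm j)

theorem exists_isProperEdgeColoring_completeBipartiteGraph [AddCommGroup ι] :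
    ∃ c : (completeBipartiteGraph ι ι).edgeSet → ι,
      IsProperEdgeColoring (completeBipartiteGraph ι ι) c := by
  let d : Sym2 (ι ⊕ ι) → ι :=
    Sym2.lift ⟨fun u v => u.elim id id + v.elim id id, fun _ _ => add_comm _ _⟩
  refine ⟨d ∘ Subtype.val, isProperEdgeColoring_comp_val_iff.2 ?_⟩
  rintro (u | u) (v | v) (w | w) <;> simp [d]

theorem distinguishingChromaticIndex_endlineGraph_completeBipartiteGraph_three :
    distinguishingChromaticIndex (endlineGraph (completeBipartiteGraph (Fin 3) (Fin 3))) =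
      (completeBipartiteGraph (Fin 3) (Fin 3)).maxDegree + 2 := by
  have : Nontrivial (Fin 3 ⊕ Fin 3) := ⟨Sum.inl 0, Sum.inr 0, Sum.inl_ne_inr⟩
  exact distinguishingChromaticIndex_endlineGraph_of_isRegularOfDegree
    completeBipartiteGraph_connected
    (Fintype.card_fin 3 ▸ completeBipartiteGraph_isRegularOfDegree)
    exists_isProperEdgeColoring_completeBipartiteGraph
    not_hasProperDistinguishingEdgeColoring_completeBipartiteGraph_three

end CompleteBipartite

/-- If `G` is one of `C₄`, `C₆`, `K₄`, `K₃,₃`, then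
`χ'_D(G⁺) = Δ(G) + 2`. -/
theorem chromaticDistinguishingIndex_endlineGraph_of_exceptional
    {V : Type*} [Fintype V] [DecidableEq V] (G : SimpleGraph V) [DecidableRel G.Adj]
    (hexc : Nonempty (G ≃g cycleGraph 4) ∨ Nonempty (G ≃g cycleGraph 6) ∨
      Nonempty (G ≃g (⊤ : SimpleGraph (Fin 4))) ∨
      Nonempty (G ≃g completeBipartiteGraph (Fin 3) (Fin 3))) :
    distinguishingChromaticIndex (endlineGraph G) = G.maxDegree + 2 := by
  rcases hexc with ⟨⟨e⟩⟩ | ⟨⟨e⟩⟩ | ⟨⟨e⟩⟩ | ⟨⟨e⟩⟩ <;>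
    rw [distinguishingChromaticIndex_congr (endlineGraphCongr e), e.maxDegree_eq]
  · exact distinguishingChromaticIndex_endlineGraph_cycleGraph_four
  · exact distinguishingChromaticIndex_endlineGraph_cycleGraph_six
  · exact distinguishingChromaticIndex_endlineGraph_completeGraph_four
  · exact distinguishingChromaticIndex_endlineGraph_completeBipartiteGraph_three
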